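/- arXiv:1105.0105 — 7 statements merged into one kernel-verified Lean document; each statement's English description precedes it below -/
import Mathlib

section
/- For every subspace Δ ⊆ V and every skew-symmetric bilinear form Ω on V, the set D(Δ,Ω) = {(v,α) ∈ V × V* : v ∈ Δ and α(w) = Ω(v,w) for all w ∈ Δ} is a Dirac structure on V. -/
/-- The symmetric pairing on `V × V*`: `⟨⟨(v,α),(w,β)⟩⟩ = α(w) + β(v)`. -/
def symPair {V : Type*} [AddCommGroup V] [Module ℝ V]
    (x y : V × Module.Dual ℝ V) : ℝ := x.2 y.1 + y.2 x.1

/-- A Dirac structure on `V` is a subspace `D ⊆ V × V*` with `D = D^⊥`,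
where the orthogonal complement is taken relative to the symmetric pairing. -/
def IsDirac {V : Type*} [AddCommGroup V] [Module ℝ V]
    (D : Set (V × Module.Dual ℝ V)) : Prop :=
  ∀ y, y ∈ D ↔ ∀ x ∈ D, symPair x y = 0

/-! An element orthogonal to `D(Δ, Ω)` is orthogonal to all `(0, α)` with `α ∈ Δ°`, which forces its
vector part into `Δ`, and to all `(v, Ω v)` with `v ∈ Δ`, which determines its covector part on `Δ`.
Hence `D(Δ, Ω)^⊥ = D(Δ, -Ωᵀ)` for every bilinear form `Ω`, and skew-symmetry says `-Ωᵀ = Ω`. -/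

section

variable {V : Type*} [AddCommGroup V] [Module ℝ V]

/-- The set `D(Δ, Ω)` of pairs `(v, α)` such that `v` lies in `Δ` and `α` agrees with `Ω v` on `Δ`.
It is defined for any bilinear form `Ω`, so that its orthogonal complement is again of this form. -/
def inducedDirac (Δ : Submodule ℝ V) (Ω : V →ₗ[ℝ] V →ₗ[ℝ] ℝ) : Set (V × Module.Dual ℝ V) :=
  {p | p.1 ∈ Δ ∧ ∀ w ∈ Δ, p.2 w = Ω p.1 w}

variable {Δ : Submodule ℝ V} {Ω : V →ₗ[ℝ] V →ₗ[ℝ] ℝ} {x y : V × Module.Dual ℝ V}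

theorem zero_mk_mem_inducedDirac {α : Module.Dual ℝ V} (hα : α ∈ Δ.dualAnnihilator) :
    ((0, α) : V × Module.Dual ℝ V) ∈ inducedDirac Δ Ω :=
  ⟨Δ.zero_mem, fun w hw => by simpa using (Submodule.mem_dualAnnihilator α).1 hα w hw⟩

theorem mk_apply_mem_inducedDirac {v : V} (hv : v ∈ Δ) : (v, Ω v) ∈ inducedDirac Δ Ω :=
  ⟨hv, fun _ _ => rfl⟩

theorem symPair_eq_zero_of_mem_inducedDirac (hx : x ∈ inducedDirac Δ Ω)
    (hy : y ∈ inducedDirac Δ (-Ω.flip)) : symPair x y = 0 :=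
  calc x.2 y.1 + y.2 x.1
    _ = Ω x.1 y.1 + (-Ω.flip) y.1 x.1 := by rw [hx.2 y.1 hy.1, hy.2 x.1 hx.1]
    _ = 0 := add_neg_cancel (Ω x.1 y.1)

theorem fst_mem_of_forall_symPair_eq_zero (h : ∀ x ∈ inducedDirac Δ Ω, symPair x y = 0) :
    y.1 ∈ Δ := by
  refine (Subspace.forall_mem_dualAnnihilator_apply_eq_zero_iff Δ y.1).1 fun α hα => ?_
  simpa [symPair] using h (0, α) (zero_mk_mem_inducedDirac hα)

theorem snd_apply_eq_of_forall_symPair_eq_zero (h : ∀ x ∈ inducedDirac Δ Ω, symPair x y = 0)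
    {v : V} (hv : v ∈ Δ) : y.2 v = -Ω v y.1 :=
  eq_neg_of_add_eq_zero_right (h (v, Ω v) (mk_apply_mem_inducedDirac hv))

theorem mem_inducedDirac_neg_flip_iff :
    y ∈ inducedDirac Δ (-Ω.flip) ↔ ∀ x ∈ inducedDirac Δ Ω, symPair x y = 0 where
  mp hy _ hx := symPair_eq_zero_of_mem_inducedDirac hx hy
  mpr h := ⟨fst_mem_of_forall_symPair_eq_zero h,
    fun _ hv => snd_apply_eq_of_forall_symPair_eq_zero h hv⟩

theorem inducedDirac_isDirac_general (Δ : Submodule ℝ V) (Ω : V →ₗ[ℝ] V →ₗ[ℝ] ℝ)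
    (hΩ : ∀ v w, Ω v w = -Ω w v) : IsDirac (inducedDirac Δ Ω) := by
  intro y
  have neg_flip_eq : -Ω.flip = Ω := LinearMap.ext₂ fun v w => (hΩ v w).symm
  simpa only [neg_flip_eq] using mem_inducedDirac_neg_flip_iff (Δ := Δ) (Ω := Ω) (y := y)

end

/-- For every subspace `Δ ⊆ V` and every skew-symmetric bilinear form `Ω` on `V`,
the set `D(Δ,Ω) = {(v,α) : v ∈ Δ and α(w) = Ω(v,w) for all w ∈ Δ}` is a Dirac
structure on `V`. -/
theorem inducedDirac_isDirac
    {V : Type*} [AddCommGroup V] [Module ℝ V] [FiniteDimensional ℝ V]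
    (Δ : Submodule ℝ V) (Ω : V →ₗ[ℝ] V →ₗ[ℝ] ℝ)
    (hΩ : ∀ v w, Ω v w = - Ω w v) :
    IsDirac {p : V × Module.Dual ℝ V | p.1 ∈ Δ ∧ ∀ w ∈ Δ, p.2 w = Ω p.1 w} :=
  inducedDirac_isDirac_general Δ Ω hΩ
end

section
/- Every Dirac structure D on V is recovered from its projection and its Dirac two-form: with Δ = pr_V(D) and Ω_Δ the Dirac two-form of D, one has D = {(v,α) ∈ V × V* : v ∈ Δ and α(w) = Ω_Δ(v,w) for all w ∈ Δ}. -/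
section Lagrangian

variable {R M : Type*} [CommSemiring R] [AddCommMonoid M] [Module R M]
  {D : Set (M × Module.Dual R M)}

/-- `D ⊆ M × M*` is Lagrangian, `D = D^⊥`, for the symmetric pairing over a commutative semiring.
For `R = ℝ` it is definitionally `IsDirac`; `D` is a mere set because its linearity follows. -/
def IsLagrangian (D : Set (M × Module.Dual R M)) : Prop :=
  ∀ y, y ∈ D ↔ ∀ x ∈ D, x.2 y.1 + y.2 x.1 = 0

theorem IsLagrangian.mk_mem_of_eqOn (hD : IsLagrangian D) {v : M}
    {α β : Module.Dual R M} (hα : (v, α) ∈ D) (hβ : Set.EqOn β α (Prod.fst '' D)) :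
    (v, β) ∈ D := by
  refine (hD (v, β)).2 fun x hx ↦ ?_
  calc x.2 v + β x.1 = x.2 v + α x.1 := by rw [hβ (Set.mem_image_of_mem Prod.fst hx)]
    _ = 0 := (hD (v, α)).1 hα x hx

theorem dirac_recovered_from_two_form_general (hD : IsLagrangian D)
    (Ω : M → M → R) (hΩ : ∀ p ∈ D, ∀ q ∈ D, Ω p.1 q.1 = p.2 q.1) :
    D = {p : M × Module.Dual R M |
      (∃ α, (p.1, α) ∈ D) ∧ ∀ w : M, (∃ β, (w, β) ∈ D) → p.2 w = Ω p.1 w} := by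
  refine Set.Subset.antisymm ?_ ?_
  · rintro ⟨v, α⟩ hα
    exact ⟨⟨α, hα⟩, fun w ⟨β, hβ⟩ ↦ (hΩ (v, α) hα (w, β) hβ).symm⟩
  · rintro ⟨v, β⟩ ⟨⟨α, hα⟩, hβ⟩
    refine hD.mk_mem_of_eqOn hα ?_
    rintro _ ⟨⟨w, γ⟩, hγ, rfl⟩
    exact (hβ w ⟨γ, hγ⟩).trans (hΩ (v, α) hα (w, γ) hγ)

end Lagrangian

/-- Every Dirac structure `D` on `V` is recovered from its projection
`Δ = pr_V(D)` and its Dirac two-form `Ω_Δ` (any function `Ω` satisfying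
`Ω(v₁,v₂) = α₁(v₂)` for all `(v₁,α₁), (v₂,α₂) ∈ D`):
`D = {(v,α) : v ∈ Δ and α(w) = Ω_Δ(v,w) for all w ∈ Δ}`. -/
theorem dirac_recovered_from_two_form
    {V : Type*} [AddCommGroup V] [Module ℝ V] [FiniteDimensional ℝ V]
    (D : Set (V × Module.Dual ℝ V)) (hD : IsDirac D)
    (Ω : V → V → ℝ) (hΩ : ∀ p ∈ D, ∀ q ∈ D, Ω p.1 q.1 = p.2 q.1) :
    D = {p : V × Module.Dual ℝ V |
      (∃ α, (p.1, α) ∈ D) ∧ ∀ w : V, (∃ β, (w, β) ∈ D) → p.2 w = Ω p.1 w} :=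
  dirac_recovered_from_two_form_general hD Ω hΩ
end

section
/- If D_a and D_b are Dirac structures on V, then the bowtie product D_a ⋈ D_b is a Dirac structure on V. -/
/-- The bowtie product `D_a ⋈ D_b`: all `(v,α)` such that there exists
`β ∈ V*` with `(v, α+β) ∈ D_a` and `(v, −β) ∈ D_b`. -/
def bowtie {V : Type*} [AddCommGroup V] [Module ℝ V]
    (Da Db : Set (V × Module.Dual ℝ V)) : Set (V × Module.Dual ℝ V) :=
  {p | ∃ β : Module.Dual ℝ V, (p.1, p.2 + β) ∈ Da ∧ (p.1, -β) ∈ Db}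

/-!
For arbitrary subspaces `A` and `B` of `V × V*` one has `(A ⋈ B)^⊥ = A^⊥ ⋈ B^⊥`; taking `A = A^⊥`
and `B = B^⊥` gives the theorem. The inclusion `⊇` is a computation. For `⊆`, the `β` exhibiting
`(w, γ) ∈ (A ⋈ B)^⊥` as a member of `A^⊥ ⋈ B^⊥` has prescribed values on the projections of `A` and
of `B` to `V`; orthogonality to `A ⋈ B` says precisely that these prescriptions agree where the
projections meet, so they extend to a functional on `V`.
-/

section DualExtension

variable {K M N V : Type*} [Field K] [AddCommGroup M] [Module K M] [AddCommGroup N] [Module K N]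
  [AddCommGroup V] [Module K V]

theorem exists_dual_comp_eq_of_ker_le_ker (g : M →ₗ[K] V) (φ : Module.Dual K M)
    (h : LinearMap.ker g ≤ LinearMap.ker φ) : ∃ β : Module.Dual K V, β ∘ₗ g = φ := by
  have hφ : φ ∈ (LinearMap.ker g).dualAnnihilator := (Submodule.mem_dualAnnihilator φ).2 h
  rwa [← LinearMap.range_dualMap_eq_dualAnnihilator_ker] at hφ

theorem exists_dual_comp_eq_and_comp_eq (f : M →ₗ[K] V) (g : N →ₗ[K] V)
    (φ : Module.Dual K M) (ψ : Module.Dual K N) (h : ∀ x y, f x = g y → φ x = ψ y) :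
    ∃ β : Module.Dual K V, β ∘ₗ f = φ ∧ β ∘ₗ g = ψ := by
  have hker : LinearMap.ker (f.coprod (-g)) ≤ LinearMap.ker (φ.coprod (-ψ)) := by
    rintro ⟨x, y⟩ hxy
    simp only [LinearMap.mem_ker, LinearMap.coprod_apply, LinearMap.neg_apply,
      ← sub_eq_add_neg, sub_eq_zero] at hxy ⊢
    exact h x y hxy
  obtain ⟨β, hβ⟩ := exists_dual_comp_eq_of_ker_le_ker _ _ hker
  refine ⟨β, LinearMap.ext fun x => ?_, LinearMap.ext fun y => ?_⟩
  · simpa using LinearMap.congr_fun hβ (x, 0)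
  · simpa using LinearMap.congr_fun hβ (0, y)

end DualExtension

section Bowtie

variable {V : Type*} [AddCommGroup V] [Module ℝ V]

/-- The symmetric pairing `symPair` as a bilinear form: Mathlib's `LinearMap.dualProd`, which lives
on `V* × V`, with the two factors swapped. -/
def symPairing : LinearMap.BilinForm ℝ (V × Module.Dual ℝ V) :=
  (LinearMap.dualProd ℝ V).compl₁₂ (LinearEquiv.prodComm ℝ V (Module.Dual ℝ V)).toLinearMap
    (LinearEquiv.prodComm ℝ V (Module.Dual ℝ V)).toLinearMap

theorem symPairing_apply (x y : V × Module.Dual ℝ V) : symPairing x y = symPair x y :=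
  add_comm _ _

/-- The orthogonal complement `D^⊥` with respect to the symmetric pairing. It is a subspace for
every set `D`. -/
def symOrthogonal (D : Set (V × Module.Dual ℝ V)) : Submodule ℝ (V × Module.Dual ℝ V) :=
  ⨅ x ∈ D, LinearMap.ker (symPairing x)

theorem mem_symOrthogonal {D : Set (V × Module.Dual ℝ V)} {y : V × Module.Dual ℝ V} :
    y ∈ symOrthogonal D ↔ ∀ x ∈ D, symPair x y = 0 := by
  simp only [symOrthogonal, Submodule.mem_iInf, LinearMap.mem_ker, symPairing_apply]

theorem isDirac_iff_coe_symOrthogonal_eq {D : Set (V × Module.Dual ℝ V)} :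
    IsDirac D ↔ (symOrthogonal D : Set (V × Module.Dual ℝ V)) = D := by
  simp only [IsDirac, Set.ext_iff, SetLike.mem_coe, mem_symOrthogonal, iff_comm]

theorem mk_add_mem_bowtie {A B : Set (V × Module.Dual ℝ V)} {v : V} {α β : Module.Dual ℝ V}
    (hα : (v, α) ∈ A) (hβ : (v, β) ∈ B) : (v, α + β) ∈ bowtie A B :=
  ⟨-β, by simpa using hα, by simpa using hβ⟩

theorem bowtie_symOrthogonal_subset (A B : Set (V × Module.Dual ℝ V)) :
    bowtie (V := V) (symOrthogonal A) (symOrthogonal B) ⊆ symOrthogonal (bowtie A B) := by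
  rintro ⟨w, γ⟩ ⟨β, hA, hB⟩
  refine mem_symOrthogonal.2 ?_
  rintro ⟨v, α⟩ ⟨δ, hvA, hvB⟩
  have orthA := mem_symOrthogonal.1 hA _ hvA
  have orthB := mem_symOrthogonal.1 hB _ hvB
  simp only [symPair, LinearMap.add_apply, LinearMap.neg_apply] at orthA orthB ⊢
  linarith

theorem exists_dual_eq_symPair_of_mem_symOrthogonal_bowtie
    {A B : Submodule ℝ (V × Module.Dual ℝ V)} {w : V} {γ : Module.Dual ℝ V}
    (h : (w, γ) ∈ symOrthogonal (V := V) (bowtie A B)) :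
    ∃ β : Module.Dual ℝ V, (∀ x ∈ A, β x.1 = -symPair x (w, γ)) ∧
      ∀ x ∈ B, β x.1 = symPair x (w, 0) := by
  let πA : A →ₗ[ℝ] V := (LinearMap.fst ℝ V (Module.Dual ℝ V)).domRestrict A
  let πB : B →ₗ[ℝ] V := (LinearMap.fst ℝ V (Module.Dual ℝ V)).domRestrict B
  let φ : Module.Dual ℝ A := -(symPairing.flip (w, γ)).domRestrict A
  let ψ : Module.Dual ℝ B := (symPairing.flip (w, 0)).domRestrict B
  have hφ (x : A) : φ x = -symPair x.1 (w, γ) := congrArg Neg.neg (symPairing_apply _ _)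
  have hψ (y : B) : ψ y = symPair y.1 (w, 0) := symPairing_apply _ _
  have compatible (x : A) (y : B) (hxy : πA x = πB y) : φ x = ψ y := by
    obtain ⟨⟨v, α⟩, hA⟩ := x
    obtain ⟨⟨v', α'⟩, hB⟩ := y
    obtain rfl : v = v' := hxy
    have orth := mem_symOrthogonal.1 h _ (mk_add_mem_bowtie hA hB)
    simp only [hφ, hψ, symPair, LinearMap.add_apply, LinearMap.zero_apply] at orth ⊢
    linarith
  obtain ⟨β, hβA, hβB⟩ :=
    exists_dual_comp_eq_and_comp_eq (M := A) (N := B) πA πB φ ψ compatible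
  exact ⟨β, fun x hx => (LinearMap.congr_fun hβA ⟨x, hx⟩).trans (hφ _),
    fun x hx => (LinearMap.congr_fun hβB ⟨x, hx⟩).trans (hψ _)⟩

theorem symOrthogonal_bowtie (A B : Submodule ℝ (V × Module.Dual ℝ V)) :
    (symOrthogonal (V := V) (bowtie A B) : Set (V × Module.Dual ℝ V)) =
      bowtie (symOrthogonal (V := V) A) (symOrthogonal (V := V) B) := by
  refine Set.Subset.antisymm ?_ (bowtie_symOrthogonal_subset _ _)
  rintro ⟨w, γ⟩ hwγ
  obtain ⟨β, hβA, hβB⟩ := exists_dual_eq_symPair_of_mem_symOrthogonal_bowtie hwγ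
  refine ⟨β, mem_symOrthogonal.2 fun x hx => ?_, mem_symOrthogonal.2 fun x hx => ?_⟩
  · have hβx := hβA x hx
    simp only [symPair, LinearMap.add_apply] at hβx ⊢
    linarith
  · have hβx := hβB x hx
    simp only [symPair, LinearMap.zero_apply, LinearMap.neg_apply] at hβx ⊢
    linarith

end Bowtie

theorem bowtie_isDirac_general {V : Type*} [AddCommGroup V] [Module ℝ V]
    (Da Db : Set (V × Module.Dual ℝ V)) (ha : IsDirac Da) (hb : IsDirac Db) :
    IsDirac (bowtie Da Db) := by
  rw [isDirac_iff_coe_symOrthogonal_eq] at ha hb ⊢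
  simpa only [ha, hb] using symOrthogonal_bowtie (symOrthogonal Da) (symOrthogonal Db)

/-- If `D_a` and `D_b` are Dirac structures on `V`, then the bowtie product
`D_a ⋈ D_b` is a Dirac structure on `V`. -/
theorem bowtie_isDirac
    {V : Type*} [AddCommGroup V] [Module ℝ V] [FiniteDimensional ℝ V]
    (Da Db : Set (V × Module.Dual ℝ V))
    (ha : IsDirac Da) (hb : IsDirac Db) :
    IsDirac (bowtie Da Db) :=
  bowtie_isDirac_general Da Db ha hb
end

section
/- Let D_a and D_b be Dirac structures on V, with Δ_a = pr_V(D_a), Δ_b = pr_V(D_b), and Dirac two-forms Ω_a on Δ_a and Ω_b on Δ_b. Then (v,α) ∈ D_a ⋈ D_b if and only if v ∈ Δ_a ∩ Δ_b and α(w) = Ω_a(v,w) + Ω_b(v,w) for all w ∈ Δ_a ∩ Δ_b; in particular, pr_V(D_a ⋈ D_b) = Δ_a ∩ Δ_b and the Dirac two-form of D_a ⋈ D_b is (Ω_a + Ω_b) restricted to Δ_a ∩ Δ_b. -/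
/-!
Over `v`, a Dirac structure `D` with projection `Δ` is either empty or a coset of the annihilator
`Δ°`. So if `(v, αa) ∈ D_a` and `(v, αb) ∈ D_b`, the covectors `α` with `(v, α) ∈ D_a ⋈ D_b` form
the coset of `αa + αb` modulo `Δ_a° + Δ_b° = (Δ_a ∩ Δ_b)°`, that is, those agreeing with
`αa + αb` on `Δ_a ∩ Δ_b`.
-/

section

variable {V : Type*} [AddCommGroup V] [Module ℝ V]

theorem symPair_zero_right (x : V × Module.Dual ℝ V) : symPair x 0 = 0 := by
  simp [symPair]

theorem symPair_add_right (x y z : V × Module.Dual ℝ V) :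
    symPair x (y + z) = symPair x y + symPair x z := by
  simp only [symPair, Prod.fst_add, Prod.snd_add, map_add, LinearMap.add_apply]
  ring

theorem symPair_smul_right (c : ℝ) (x y : V × Module.Dual ℝ V) :
    symPair x (c • y) = c * symPair x y := by
  simp only [symPair, Prod.smul_fst, Prod.smul_snd, map_smul, LinearMap.smul_apply, smul_eq_mul]
  ring

theorem exists_mem_bowtie_iff {Da Db : Set (V × Module.Dual ℝ V)} {v : V} :
    (∃ α, (v, α) ∈ bowtie Da Db) ↔ (∃ αa, (v, αa) ∈ Da) ∧ ∃ αb, (v, αb) ∈ Db := by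
  constructor
  · rintro ⟨α, β, hva, hvb⟩
    exact ⟨⟨α + β, hva⟩, ⟨-β, hvb⟩⟩
  · rintro ⟨⟨αa, hva⟩, ⟨αb, hvb⟩⟩
    exact ⟨αa + αb, -αb, by simpa using hva, by simpa using hvb⟩

namespace IsDirac

variable {D Da Db : Set (V × Module.Dual ℝ V)}

/-- A Dirac structure, which `IsDirac` presents as a set, bundled as a subspace of `V × V*`. -/
def toSubmodule (hD : IsDirac D) : Submodule ℝ (V × Module.Dual ℝ V) where
  carrier := D
  zero_mem' := (hD 0).2 fun x _ ↦ symPair_zero_right x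
  add_mem' {y z} hy hz := (hD (y + z)).2 fun x hx ↦ by
    rw [symPair_add_right, (hD y).1 hy x hx, (hD z).1 hz x hx, add_zero]
  smul_mem' c y hy := (hD (c • y)).2 fun x hx ↦ by
    rw [symPair_smul_right, (hD y).1 hy x hx, mul_zero]

/-- The projection `Δ = pr_V(D)` of a Dirac structure, as a subspace of `V`. -/
def proj (hD : IsDirac D) : Submodule ℝ V :=
  hD.toSubmodule.map (LinearMap.fst ℝ V (Module.Dual ℝ V))

theorem mem_proj (hD : IsDirac D) {v : V} : v ∈ hD.proj ↔ ∃ α, (v, α) ∈ D := by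
  simp [proj, toSubmodule]

theorem mem_iff_sub_mem_dualAnnihilator (hD : IsDirac D) {v : V} {α β : Module.Dual ℝ V}
    (hα : (v, α) ∈ D) : (v, β) ∈ D ↔ β - α ∈ hD.proj.dualAnnihilator := by
  have symPair_eq (x) (hx : x ∈ D) : symPair x (v, β) = (β - α) x.1 := by
    have hxα : x.2 v + α x.1 = 0 := (hD _).1 hα x hx
    simp only [symPair, LinearMap.sub_apply]
    linear_combination hxα
  rw [hD, Submodule.mem_dualAnnihilator]
  constructor
  · intro hβ w hw
    obtain ⟨γ, hγ⟩ := hD.mem_proj.1 hw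
    exact (symPair_eq _ hγ).symm.trans (hβ _ hγ)
  · intro hβ x hx
    exact (symPair_eq x hx).trans (hβ _ (hD.mem_proj.2 ⟨x.2, hx⟩))

theorem mem_bowtie_iff_sub_mem_dualAnnihilator (ha : IsDirac Da) (hb : IsDirac Db) {v : V}
    {α αa αb : Module.Dual ℝ V} (hva : (v, αa) ∈ Da) (hvb : (v, αb) ∈ Db) :
    (v, α) ∈ bowtie Da Db ↔ α - (αa + αb) ∈ (ha.proj ⊓ hb.proj).dualAnnihilator := by
  rw [Subspace.dualAnnihilator_inf_eq, Submodule.mem_sup]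
  simp only [bowtie, Set.mem_ofPred_eq, ha.mem_iff_sub_mem_dualAnnihilator hva,
    hb.mem_iff_sub_mem_dualAnnihilator hvb]
  constructor
  · rintro ⟨β, hβa, hβb⟩
    exact ⟨α + β - αa, hβa, -β - αb, hβb, by abel⟩
  · rintro ⟨γa, hγa, γb, hγb, hsum⟩
    have hγa_eq : α + -(αb + γb) - αa = γa := by
      rw [eq_sub_of_add_eq hsum]
      abel
    have hγb_eq : - -(αb + γb) - αb = γb := by abel
    exact ⟨-(αb + γb), by rwa [hγa_eq], by rwa [hγb_eq]⟩

theorem mem_bowtie_iff_forall_apply_eq (ha : IsDirac Da) (hb : IsDirac Db) {v : V}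
    {α αa αb : Module.Dual ℝ V} (hva : (v, αa) ∈ Da) (hvb : (v, αb) ∈ Db) :
    (v, α) ∈ bowtie Da Db ↔
      ∀ w, (∃ βa, (w, βa) ∈ Da) → (∃ βb, (w, βb) ∈ Db) → α w = αa w + αb w := by
  simp only [ha.mem_bowtie_iff_sub_mem_dualAnnihilator hb hva hvb,
    Submodule.mem_dualAnnihilator, Submodule.mem_inf, mem_proj, and_imp, LinearMap.sub_apply,
    LinearMap.add_apply, sub_eq_zero]

end IsDirac

end

theorem bowtie_characterization_general
    {V : Type*} [AddCommGroup V] [Module ℝ V]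
    (Da Db : Set (V × Module.Dual ℝ V))
    (ha : IsDirac Da) (hb : IsDirac Db)
    (Ωa Ωb : V → V → ℝ)
    (hΩa : ∀ p ∈ Da, ∀ q ∈ Da, Ωa p.1 q.1 = p.2 q.1)
    (hΩb : ∀ p ∈ Db, ∀ q ∈ Db, Ωb p.1 q.1 = p.2 q.1) :
    (∀ (v : V) (α : Module.Dual ℝ V),
      (v, α) ∈ bowtie Da Db ↔
        ((∃ αa, (v, αa) ∈ Da) ∧ (∃ αb, (v, αb) ∈ Db) ∧
          ∀ w : V, (∃ βa, (w, βa) ∈ Da) → (∃ βb, (w, βb) ∈ Db) →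
            α w = Ωa v w + Ωb v w)) ∧
    {v | ∃ α, (v, α) ∈ bowtie Da Db}
      = {v | ∃ α, (v, α) ∈ Da} ∩ {v | ∃ α, (v, α) ∈ Db} := by
  have mem_iff {v : V} {α αa αb : Module.Dual ℝ V} (hva : (v, αa) ∈ Da) (hvb : (v, αb) ∈ Db) :
      (v, α) ∈ bowtie Da Db ↔ ∀ w, (∃ βa, (w, βa) ∈ Da) → (∃ βb, (w, βb) ∈ Db) →
        α w = Ωa v w + Ωb v w := by
    rw [ha.mem_bowtie_iff_forall_apply_eq hb hva hvb]
    refine forall_congr' fun w ↦ forall₂_congr fun ⟨_, hwa⟩ ⟨_, hwb⟩ ↦ ?_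
    rw [hΩa _ hva _ hwa, hΩb _ hvb _ hwb]
  refine ⟨fun v α ↦ ⟨fun h ↦ ?_, ?_⟩, Set.ext fun v ↦ exists_mem_bowtie_iff⟩
  · obtain ⟨⟨αa, hva⟩, ⟨αb, hvb⟩⟩ := exists_mem_bowtie_iff.1 ⟨α, h⟩
    exact ⟨⟨αa, hva⟩, ⟨αb, hvb⟩, (mem_iff hva hvb).1 h⟩
  · rintro ⟨⟨αa, hva⟩, ⟨αb, hvb⟩, hα⟩
    exact (mem_iff hva hvb).2 hα

/-- Let `D_a` and `D_b` be Dirac structures on `V` with projections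
`Δ_a = pr_V(D_a)`, `Δ_b = pr_V(D_b)` and Dirac two-forms `Ω_a`, `Ω_b`.
Then `(v,α) ∈ D_a ⋈ D_b` iff `v ∈ Δ_a ∩ Δ_b` and
`α(w) = Ω_a(v,w) + Ω_b(v,w)` for all `w ∈ Δ_a ∩ Δ_b`; in particular
`pr_V(D_a ⋈ D_b) = Δ_a ∩ Δ_b`. -/
theorem bowtie_characterization
    {V : Type*} [AddCommGroup V] [Module ℝ V] [FiniteDimensional ℝ V]
    (Da Db : Set (V × Module.Dual ℝ V))
    (ha : IsDirac Da) (hb : IsDirac Db)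
    (Ωa Ωb : V → V → ℝ)
    (hΩa : ∀ p ∈ Da, ∀ q ∈ Da, Ωa p.1 q.1 = p.2 q.1)
    (hΩb : ∀ p ∈ Db, ∀ q ∈ Db, Ωb p.1 q.1 = p.2 q.1) :
    (∀ (v : V) (α : Module.Dual ℝ V),
      (v, α) ∈ bowtie Da Db ↔
        ((∃ αa, (v, αa) ∈ Da) ∧ (∃ αb, (v, αb) ∈ Db) ∧
          ∀ w : V, (∃ βa, (w, βa) ∈ Da) → (∃ βb, (w, βb) ∈ Db) →
            α w = Ωa v w + Ωb v w)) ∧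
    {v | ∃ α, (v, α) ∈ bowtie Da Db}
      = {v | ∃ α, (v, α) ∈ Da} ∩ {v | ∃ α, (v, α) ∈ Db} :=
  bowtie_characterization_general Da Db ha hb Ωa Ωb hΩa hΩb
end

section
/- The bowtie product of Dirac structures is associative: for any Dirac structures D_a, D_b, D_c on V, (D_a ⋈ D_b) ⋈ D_c = D_a ⋈ (D_b ⋈ D_c). -/
section Fibers

open scoped Pointwise

variable {V : Type*} [AddCommGroup V] [Module ℝ V]

theorem mk_preimage_bowtie (Da Db : Set (V × Module.Dual ℝ V)) (v : V) :
    Prod.mk v ⁻¹' bowtie Da Db = Prod.mk v ⁻¹' Da + Prod.mk v ⁻¹' Db := by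
  ext α
  constructor
  · rintro ⟨β, hβa, hβb⟩
    exact ⟨α + β, hβa, -β, hβb, add_neg_cancel_right α β⟩
  · rintro ⟨βa, hβa, βb, hβb, rfl⟩
    exact ⟨-βb, by simpa using hβa, by simpa using hβb⟩

theorem bowtie_assoc_general (Da Db Dc : Set (V × Module.Dual ℝ V)) :
    bowtie (bowtie Da Db) Dc = bowtie Da (bowtie Db Dc) := by
  ext ⟨v, α⟩
  have fiber_eq : Prod.mk v ⁻¹' bowtie (bowtie Da Db) Dc =
      Prod.mk v ⁻¹' bowtie Da (bowtie Db Dc) := by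
    simp only [mk_preimage_bowtie, add_assoc]
  exact Set.ext_iff.mp fiber_eq α

end Fibers

/-- The bowtie product of Dirac structures is associative:
`(D_a ⋈ D_b) ⋈ D_c = D_a ⋈ (D_b ⋈ D_c)`. -/
theorem bowtie_assoc
    {V : Type*} [AddCommGroup V] [Module ℝ V] [FiniteDimensional ℝ V]
    (Da Db Dc : Set (V × Module.Dual ℝ V))
    (ha : IsDirac Da) (hb : IsDirac Db) (hc : IsDirac Dc) :
    bowtie (bowtie Da Db) Dc = bowtie Da (bowtie Db Dc) :=
  bowtie_assoc_general Da Db Dc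
end

section
/- For any linear map φ : U → W between finite-dimensional real vector spaces and any Dirac structure D_U on U, the push-forward φ_* D_U is a Dirac structure on W. -/
/-- The push-forward of a Dirac structure `D_U` on `U` along a linear map
`φ : U → W`: `φ_* D_U = {(φ(u), α) : u ∈ U, α ∈ W*, (u, φ*(α)) ∈ D_U}`, where
`φ* : W* → U*` is the dual map. -/
def pushforward {U W : Type*} [AddCommGroup U] [Module ℝ U]
    [AddCommGroup W] [Module ℝ W]
    (φ : U →ₗ[ℝ] W) (D : Set (U × Module.Dual ℝ U)) :
    Set (W × Module.Dual ℝ W) :=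
  {p | ∃ u : U, p.1 = φ u ∧ (u, p.2.comp φ) ∈ D}

/-!
Orthogonality to `(0, α) ∈ φ_* S`, for `α` vanishing on `range φ`, forces the vector part of an
element of `(φ_* S)^⊥` into `range φ`. Such an element `(φ u, β)` is orthogonal to `φ_* S` exactly
when `(u, φ* β)` is orthogonal to `S ∩ (U × range φ*)`. As `U × range φ* = (ker φ × 0)^⊥` and the
pairing on `U × U*` is nondegenerate, `(S ∩ (ker φ × 0)^⊥)^⊥ = S^⊥ + ker φ × 0`, so changing `u` by
an element of `ker φ` moves `(u, φ* β)` into `S^⊥`. Hence `(φ_* S)^⊥ = φ_* (S^⊥)` for every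
subspace `S` of `U × U*`.
-/

open Module LinearMap Submodule
open LinearMap (BilinForm)

section Orthogonal

section CommSemiring

variable {R M : Type*} [CommSemiring R] [AddCommMonoid M] [Module R M] {B : BilinForm R M}

theorem mem_orthogonal_span_iff {s : Set M} {y : M} :
    y ∈ B.orthogonal (span R s) ↔ ∀ x ∈ s, B x y = 0 :=
  span_le (p := ker (B.flip y))

theorem orthogonal_sup (N L : Submodule R M) :
    B.orthogonal (N ⊔ L) = B.orthogonal N ⊓ B.orthogonal L := by
  ext y
  exact sup_le_iff (c := ker (B.flip y))

end CommSemiring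

theorem orthogonal_inf_orthogonal {K V : Type*} [Field K] [AddCommGroup V] [Module K V]
    [FiniteDimensional K V] {B : BilinForm K V} (hB : B.Nondegenerate) (hrefl : B.IsRefl)
    (N L : Submodule K V) :
    B.orthogonal (N ⊓ B.orthogonal L) = B.orthogonal N ⊔ L := by
  calc
    B.orthogonal (N ⊓ B.orthogonal L)
      = B.orthogonal (B.orthogonal (B.orthogonal N) ⊓ B.orthogonal L) := by
        rw [BilinForm.orthogonal_orthogonal hB hrefl N]
    _ = B.orthogonal (B.orthogonal (B.orthogonal N ⊔ L)) := by rw [orthogonal_sup]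
    _ = B.orthogonal N ⊔ L := BilinForm.orthogonal_orthogonal hB hrefl _

end Orthogonal

section SymPairForm

section CommSemiring

variable (R M : Type*) [CommSemiring R] [AddCommMonoid M] [Module R M]

/-- The symmetric pairing on `M × M*` as a bilinear form, so that orthogonal complements are
available as submodules. It is Mathlib's `LinearMap.dualProd`, which lives on `M* × M`, with the
two factors swapped. -/
def symPairForm : BilinForm R (M × Dual R M) :=
  (dualProd R M).congr (LinearEquiv.prodComm R (Dual R M) M)

variable {R M}

theorem symPairForm_apply (x y : M × Dual R M) :
    symPairForm R M x y = x.2 y.1 + y.2 x.1 :=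
  add_comm _ _

theorem symPairForm_isRefl : (symPairForm R M).IsRefl := fun x y h ↦ by
  rwa [symPairForm_apply, add_comm, ← symPairForm_apply] at h

theorem mem_orthogonal_prod_bot_iff {N : Submodule R M} {x : M × Dual R M} :
    x ∈ (symPairForm R M).orthogonal (N.prod ⊥) ↔ x.2 ∈ N.dualAnnihilator := by
  simp [BilinForm.mem_orthogonal_iff, symPairForm_apply, mem_dualAnnihilator]

end CommSemiring

theorem symPairForm_nondegenerate {R M : Type*} [CommRing R] [AddCommGroup M] [Module R M]
    [Projective R M] : (symPairForm R M).Nondegenerate :=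
  BilinForm.Nondegenerate.congr _ <|
    (isSymm_dualProd R M).isRefl.nondegenerate_iff_separatingLeft.2 <|
      (separatingLeft_dualProd R M).2 (eval_apply_injective R)

variable {K V W : Type*} [Field K] [AddCommGroup V] [Module K V] [AddCommGroup W] [Module K W]

theorem mem_orthogonal_ker_prod_bot_iff (φ : V →ₗ[K] W) {x : V × Dual K V} :
    x ∈ (symPairForm K V).orthogonal ((ker φ).prod ⊥) ↔ ∃ α : Dual K W, α.comp φ = x.2 := by
  rw [mem_orthogonal_prod_bot_iff, ← range_dualMap_eq_dualAnnihilator_ker]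
  rfl

end SymPairForm

section Dirac

variable {U W : Type*} [AddCommGroup U] [Module ℝ U] [AddCommGroup W] [Module ℝ W]

theorem symPairForm_eq_symPair (x y : U × Dual ℝ U) : symPairForm ℝ U x y = symPair x y :=
  symPairForm_apply x y

theorem IsDirac.coe_orthogonal_span {D : Set (U × Dual ℝ U)} (hD : IsDirac D) :
    ((symPairForm ℝ U).orthogonal (span ℝ D) : Set (U × Dual ℝ U)) = D := by
  ext y
  simp only [SetLike.mem_coe, mem_orthogonal_span_iff, symPairForm_eq_symPair, hD y]

theorem IsDirac.coe_span {D : Set (U × Dual ℝ U)} (hD : IsDirac D) :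
    (span ℝ D : Set (U × Dual ℝ U)) = D := by
  rw [← hD.coe_orthogonal_span, span_eq]

theorem symPair_apply_comp (φ : U →ₗ[ℝ] W) (u v : U) (α β : Dual ℝ W) :
    symPair (φ u, α) (φ v, β) = symPair (u, α.comp φ) (v, β.comp φ) :=
  rfl

theorem fst_mem_range_of_forall_mem_pushforward (φ : U →ₗ[ℝ] W) {S : Set (U × Dual ℝ U)}
    (hS : 0 ∈ S) {y : W × Dual ℝ W} (hy : ∀ x ∈ pushforward φ S, symPair x y = 0) :
    y.1 ∈ range φ := by
  refine (Subspace.forall_mem_dualAnnihilator_apply_eq_zero_iff (range φ) y.1).1 fun α hα ↦ ?_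
  have hαφ : α.comp φ = 0 := by rwa [← ker_dualMap_eq_dualAnnihilator_range] at hα
  have hmem : ((0, α) : W × Dual ℝ W) ∈ pushforward φ S :=
    ⟨0, (map_zero φ).symm, by rwa [hαφ]⟩
  simpa [symPair] using hy (0, α) hmem

theorem mem_pushforward_orthogonal_iff [FiniteDimensional ℝ U] (φ : U →ₗ[ℝ] W)
    (S : Submodule ℝ (U × Dual ℝ U)) {y : W × Dual ℝ W} :
    y ∈ pushforward φ ((symPairForm ℝ U).orthogonal S) ↔
      ∀ x ∈ pushforward φ S, symPair x y = 0 := by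
  obtain ⟨w, β⟩ := y
  constructor
  · rintro ⟨v, rfl, hv⟩ ⟨_, α⟩ ⟨u, rfl, hu⟩
    rw [symPair_apply_comp, ← symPairForm_eq_symPair]
    exact hv _ hu
  · intro hy
    obtain ⟨v, rfl⟩ : w ∈ range φ := fst_mem_range_of_forall_mem_pushforward φ S.zero_mem hy
    have hv : (v, β.comp φ) ∈
        (symPairForm ℝ U).orthogonal (S ⊓ (symPairForm ℝ U).orthogonal ((ker φ).prod ⊥)) := by
      rintro ⟨u, a⟩ ⟨hu, hua⟩
      obtain ⟨α, rfl⟩ := (mem_orthogonal_ker_prod_bot_iff φ).1 hua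
      rw [symPairForm_eq_symPair, ← symPair_apply_comp]
      exact hy (φ u, α) ⟨u, rfl, hu⟩
    rw [orthogonal_inf_orthogonal symPairForm_nondegenerate symPairForm_isRefl] at hv
    obtain ⟨⟨u, a⟩, hu, ⟨k, b⟩, ⟨hk, hb⟩, huk⟩ := mem_sup.1 hv
    obtain rfl : b = 0 := hb
    obtain ⟨rfl, rfl⟩ : u + k = v ∧ a = β.comp φ := by simpa using huk
    have hφ : φ (u + k) = φ u := by rw [map_add, mem_ker.1 hk, add_zero]
    exact ⟨u, hφ, hu⟩

theorem pushforward_isDirac_general [FiniteDimensional ℝ U] (φ : U →ₗ[ℝ] W)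
    (D : Set (U × Dual ℝ U)) (hD : IsDirac D) : IsDirac (pushforward φ D) := fun y ↦ by
  have h := mem_pushforward_orthogonal_iff φ (span ℝ D) (y := y)
  rwa [hD.coe_orthogonal_span, hD.coe_span] at h

end Dirac

/-- For any linear map `φ : U → W` between finite-dimensional real vector
spaces and any Dirac structure `D_U` on `U`, the push-forward `φ_* D_U` is a
Dirac structure on `W`. -/
theorem pushforward_isDirac
    {U W : Type*} [AddCommGroup U] [Module ℝ U] [FiniteDimensional ℝ U]
    [AddCommGroup W] [Module ℝ W] [FiniteDimensional ℝ W]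
    (φ : U →ₗ[ℝ] W) (D : Set (U × Module.Dual ℝ U)) (hD : IsDirac D) :
    IsDirac (pushforward φ D) :=
  pushforward_isDirac_general φ D hD
end

section
/- Let V₁, V_s, V₂ be finite-dimensional real vector spaces, D₁ a Dirac structure on V₁ × V_s, and D₂ a Dirac structure on V_s × V₂. Set V = V₁ × V_s × V_s × V₂, let Δ_int = {(v₁, v_s, −v_s, v₂) : v₁ ∈ V₁, v_s ∈ V_s, v₂ ∈ V₂} ⊆ V, and let D_int = Δ_int × Δ_int° be the corresponding Dirac structure on V. Let Ψ : V → V₁ × V₂ be the projection (v₁, v_s, v_s', v₂) ↦ (v₁, v₂). Then Ψ_*((D₁ ⊕ D₂) ⋈ D_int) = D₁ ‖ D₂; that is, the composition of D₁ and D₂ equals the push-forward along Ψ of the bowtie interconnection of D₁ ⊕ D₂ with D_int. -/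
/-- The identification of `V₁* × V₂*` with `(V₁ × V₂)*`:
`(α₁, α₂) ↦ ((w₁,w₂) ↦ α₁(w₁) + α₂(w₂))`. -/
def dualProd {V₁ V₂ : Type*} [AddCommGroup V₁] [Module ℝ V₁]
    [AddCommGroup V₂] [Module ℝ V₂]
    (α₁ : Module.Dual ℝ V₁) (α₂ : Module.Dual ℝ V₂) : Module.Dual ℝ (V₁ × V₂) :=
  α₁.comp (LinearMap.fst ℝ V₁ V₂) + α₂.comp (LinearMap.snd ℝ V₁ V₂)

/-- The Dirac sum `D₁ ⊕ D₂`. -/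
def diracSum {V₁ V₂ : Type*} [AddCommGroup V₁] [Module ℝ V₁]
    [AddCommGroup V₂] [Module ℝ V₂]
    (D₁ : Set (V₁ × Module.Dual ℝ V₁)) (D₂ : Set (V₂ × Module.Dual ℝ V₂)) :
    Set ((V₁ × V₂) × Module.Dual ℝ (V₁ × V₂)) :=
  {p | ∃ α₁ α₂, (p.1.1, α₁) ∈ D₁ ∧ (p.1.2, α₂) ∈ D₂ ∧ p.2 = dualProd α₁ α₂}

/-- The composition `D₁ ‖ D₂` of a Dirac structure `D₁` on `V₁ × V_s` with a
Dirac structure `D₂` on `V_s × V₂`: all `(v₁,v₂,α₁,α₂)` such that there exist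
`v_s ∈ V_s` and `α_s ∈ V_s*` with `(v₁,v_s,α₁,α_s) ∈ D₁` and
`(−v_s,v₂,α_s,α₂) ∈ D₂`. -/
def diracComp {V₁ Vs V₂ : Type*} [AddCommGroup V₁] [Module ℝ V₁]
    [AddCommGroup Vs] [Module ℝ Vs] [AddCommGroup V₂] [Module ℝ V₂]
    (D₁ : Set ((V₁ × Vs) × Module.Dual ℝ (V₁ × Vs)))
    (D₂ : Set ((Vs × V₂) × Module.Dual ℝ (Vs × V₂))) :
    Set ((V₁ × V₂) × Module.Dual ℝ (V₁ × V₂)) :=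
  {p | ∃ (vs : Vs) (αs : Module.Dual ℝ Vs)
        (α₁ : Module.Dual ℝ V₁) (α₂ : Module.Dual ℝ V₂),
      p.2 = dualProd α₁ α₂ ∧
      ((p.1.1, vs), dualProd α₁ αs) ∈ D₁ ∧
      ((-vs, p.1.2), dualProd αs α₂) ∈ D₂}

/-!
Interconnecting with `Δ × Δ°` lets one change a covector freely as long as its restriction to `Δ`
stays the same. A covector `(α₁, α_s, α_s', α₂)` on `V₁ × V_s × V_s × V₂` has the same restriction
to `{(v₁, v_s, -v_s, v₂)}` as the pull-back `(γ₁, 0, 0, γ₂)` exactly when `α₁ = γ₁`, `α_s = α_s'`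
and `α₂ = γ₂`, which is the matching condition on covectors in the composition.
-/

section DualProd

variable {V₁ V₂ : Type*} [AddCommGroup V₁] [Module ℝ V₁] [AddCommGroup V₂] [Module ℝ V₂]

@[simp]
lemma dualProd_apply (α₁ : Module.Dual ℝ V₁) (α₂ : Module.Dual ℝ V₂) (v : V₁ × V₂) :
    dualProd α₁ α₂ v = α₁ v.1 + α₂ v.2 :=
  rfl

lemma dualProd_inj {α₁ β₁ : Module.Dual ℝ V₁} {α₂ β₂ : Module.Dual ℝ V₂} :
    dualProd α₁ α₂ = dualProd β₁ β₂ ↔ α₁ = β₁ ∧ α₂ = β₂ :=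
  ((LinearMap.coprodEquiv ℝ).injective.eq_iff (a := (α₁, α₂)) (b := (β₁, β₂))).trans Prod.mk_inj

lemma exists_dualProd_eq (α : Module.Dual ℝ (V₁ × V₂)) : ∃ α₁ α₂, dualProd α₁ α₂ = α :=
  ⟨α.comp (.inl ℝ V₁ V₂), α.comp (.inr ℝ V₁ V₂), LinearMap.coprod_comp_inl_inr α⟩

lemma mk_dualProd_mem_diracSum {D₁ : Set (V₁ × Module.Dual ℝ V₁)}
    {D₂ : Set (V₂ × Module.Dual ℝ V₂)} {v : V₁ × V₂}
    {α₁ : Module.Dual ℝ V₁} {α₂ : Module.Dual ℝ V₂} :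
    (v, dualProd α₁ α₂) ∈ diracSum D₁ D₂ ↔ (v.1, α₁) ∈ D₁ ∧ (v.2, α₂) ∈ D₂ := by
  constructor
  · rintro ⟨β₁, β₂, hβ₁, hβ₂, hαβ⟩
    obtain ⟨rfl, rfl⟩ := dualProd_inj.1 hαβ
    exact ⟨hβ₁, hβ₂⟩
  · rintro ⟨hα₁, hα₂⟩
    exact ⟨α₁, α₂, hα₁, hα₂, rfl⟩

end DualProd

section AnnihilatorDirac

variable {V : Type*} [AddCommGroup V] [Module ℝ V]

/-- The structure `Δ × Δ°` on `V`, a Dirac structure when `Δ` is a subspace. It is defined for an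
arbitrary set `Δ`, with `Δ°` the covectors vanishing on `Δ`. -/
def annihilatorDirac (Δ : Set V) : Set (V × Module.Dual ℝ V) :=
  {p | p.1 ∈ Δ ∧ ∀ w ∈ Δ, p.2 w = 0}

lemma mem_bowtie_annihilatorDirac {D : Set (V × Module.Dual ℝ V)} {Δ : Set V}
    {v : V} {α : Module.Dual ℝ V} :
    (v, α) ∈ bowtie D (annihilatorDirac Δ) ↔ v ∈ Δ ∧ ∃ δ, (v, δ) ∈ D ∧ Set.EqOn δ α Δ := by
  constructor
  · rintro ⟨β, hD, hv, hβ⟩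
    refine ⟨hv, α + β, hD, fun w hw ↦ ?_⟩
    have hβw : β w = 0 := neg_eq_zero.1 (hβ w hw)
    rw [LinearMap.add_apply, hβw, add_zero]
  · rintro ⟨hv, δ, hD, hδα⟩
    refine ⟨δ - α, by rwa [add_sub_cancel], hv, fun w hw ↦ ?_⟩
    rw [neg_sub, LinearMap.sub_apply, hδα hw, sub_self]

end AnnihilatorDirac

section InterconnectionSet

variable {V₁ Vs V₂ : Type*} [Neg Vs]

variable (V₁ Vs V₂) in
/-- The interconnection constraint `Δ_int = {(v₁, v_s, -v_s, v₂)}`: the two copies of the shared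
variable are opposite. -/
def interconnectionSet : Set ((V₁ × Vs) × (Vs × V₂)) :=
  {v | v.2.1 = -v.1.2}

lemma mk_mem_interconnectionSet {v₁ : V₁} {vs vs' : Vs} {v₂ : V₂} :
    ((v₁, vs), (vs', v₂)) ∈ interconnectionSet V₁ Vs V₂ ↔ vs' = -vs :=
  Iff.rfl

end InterconnectionSet

section Interconnection

variable {V₁ Vs V₂ : Type*} [AddCommGroup V₁] [Module ℝ V₁] [AddCommGroup Vs] [Module ℝ Vs]
  [AddCommGroup V₂] [Module ℝ V₂]

variable (V₁ Vs V₂) in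
/-- The projection `Ψ : (v₁, v_s, v_s', v₂) ↦ (v₁, v₂)` that forgets both copies of the shared
variable. -/
def forgetShared : ((V₁ × Vs) × (Vs × V₂)) →ₗ[ℝ] V₁ × V₂ :=
  (LinearMap.fst ℝ V₁ Vs).prodMap (LinearMap.snd ℝ Vs V₂)

lemma eqOn_interconnectionSet_iff {α₁ γ₁ : Module.Dual ℝ V₁} {αs αs' : Module.Dual ℝ Vs}
    {α₂ γ₂ : Module.Dual ℝ V₂} :
    Set.EqOn (dualProd (dualProd α₁ αs) (dualProd αs' α₂))
        ((dualProd γ₁ γ₂).comp (forgetShared V₁ Vs V₂)) (interconnectionSet V₁ Vs V₂) ↔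
      α₁ = γ₁ ∧ αs = αs' ∧ α₂ = γ₂ := by
  constructor
  · intro h
    have pairing_eq (v₁ : V₁) (vs : Vs) (v₂ : V₂) :
        α₁ v₁ + αs vs + (-αs' vs + α₂ v₂) = γ₁ v₁ + γ₂ v₂ := by
      have hmem : ((v₁, vs), (-vs, v₂)) ∈ interconnectionSet V₁ Vs V₂ :=
        mk_mem_interconnectionSet.2 rfl
      simpa [forgetShared] using h hmem
    refine ⟨?_, ?_, ?_⟩
    · ext v₁
      simpa using pairing_eq v₁ 0 0
    · ext vs
      simpa [add_neg_eq_zero] using pairing_eq 0 vs 0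
    · ext v₂
      simpa using pairing_eq 0 0 v₂
  · rintro ⟨rfl, rfl, rfl⟩ ⟨⟨v₁, vs⟩, ⟨vs', v₂⟩⟩ hmem
    obtain rfl := mk_mem_interconnectionSet.1 hmem
    simp [forgetShared]

variable {D₁ : Set ((V₁ × Vs) × Module.Dual ℝ (V₁ × Vs))}
  {D₂ : Set ((Vs × V₂) × Module.Dual ℝ (Vs × V₂))}
  {v₁ : V₁} {v₂ : V₂} {γ₁ : Module.Dual ℝ V₁} {γ₂ : Module.Dual ℝ V₂}

lemma mk_dualProd_mem_diracComp :
    ((v₁, v₂), dualProd γ₁ γ₂) ∈ diracComp D₁ D₂ ↔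
      ∃ vs αs, ((v₁, vs), dualProd γ₁ αs) ∈ D₁ ∧ ((-vs, v₂), dualProd αs γ₂) ∈ D₂ := by
  constructor
  · rintro ⟨vs, αs, α₁, α₂, hγα, hD₁, hD₂⟩
    obtain ⟨rfl, rfl⟩ := dualProd_inj.1 hγα
    exact ⟨vs, αs, hD₁, hD₂⟩
  · rintro ⟨vs, αs, hD₁, hD₂⟩
    exact ⟨vs, αs, γ₁, γ₂, rfl, hD₁, hD₂⟩

lemma mk_dualProd_mem_pushforward_bowtie :
    ((v₁, v₂), dualProd γ₁ γ₂) ∈ pushforward (forgetShared V₁ Vs V₂)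
        (bowtie (diracSum D₁ D₂) (annihilatorDirac (interconnectionSet V₁ Vs V₂))) ↔
      ∃ vs αs, ((v₁, vs), dualProd γ₁ αs) ∈ D₁ ∧ ((-vs, v₂), dualProd αs γ₂) ∈ D₂ := by
  constructor
  · rintro ⟨⟨⟨_, vs⟩, ⟨_, _⟩⟩, ⟨rfl, rfl⟩, hbowtie⟩
    obtain ⟨hmem, δ, hδ, hδγ⟩ := mem_bowtie_annihilatorDirac.1 hbowtie
    obtain rfl := mk_mem_interconnectionSet.1 hmem
    obtain ⟨δ₁, δ₂, rfl⟩ := exists_dualProd_eq δ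
    obtain ⟨α₁, αs, rfl⟩ := exists_dualProd_eq δ₁
    obtain ⟨αs', α₂, rfl⟩ := exists_dualProd_eq δ₂
    obtain ⟨rfl, rfl, rfl⟩ := eqOn_interconnectionSet_iff.1 hδγ
    exact ⟨vs, αs, mk_dualProd_mem_diracSum.1 hδ⟩
  · rintro ⟨vs, αs, hD⟩
    exact ⟨((v₁, vs), (-vs, v₂)), rfl, mem_bowtie_annihilatorDirac.2
      ⟨mk_mem_interconnectionSet.2 rfl, _, mk_dualProd_mem_diracSum.2 hD,
        eqOn_interconnectionSet_iff.2 ⟨rfl, rfl, rfl⟩⟩⟩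

theorem pushforward_bowtie_eq_comp_general (D₁ : Set ((V₁ × Vs) × Module.Dual ℝ (V₁ × Vs)))
    (D₂ : Set ((Vs × V₂) × Module.Dual ℝ (Vs × V₂))) :
    pushforward (forgetShared V₁ Vs V₂)
        (bowtie (diracSum D₁ D₂) (annihilatorDirac (interconnectionSet V₁ Vs V₂))) =
      diracComp D₁ D₂ := by
  ext ⟨⟨v₁, v₂⟩, γ⟩
  obtain ⟨γ₁, γ₂, rfl⟩ := exists_dualProd_eq γ
  exact mk_dualProd_mem_pushforward_bowtie.trans mk_dualProd_mem_diracComp.symm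

end Interconnection

/-- The composition of Dirac structures is the push-forward, along the
projection `Ψ : V₁ × V_s × V_s × V₂ → V₁ × V₂`, of the bowtie interconnection
of `D₁ ⊕ D₂` with the interconnection Dirac structure
`D_int = Δ_int × Δ_int°`, `Δ_int = {(v₁, v_s, −v_s, v₂)}`:
`Ψ_*((D₁ ⊕ D₂) ⋈ D_int) = D₁ ‖ D₂`. -/
theorem pushforward_bowtie_eq_comp
    {V₁ Vs V₂ : Type*}
    [AddCommGroup V₁] [Module ℝ V₁] [FiniteDimensional ℝ V₁]
    [AddCommGroup Vs] [Module ℝ Vs] [FiniteDimensional ℝ Vs]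
    [AddCommGroup V₂] [Module ℝ V₂] [FiniteDimensional ℝ V₂]
    (D₁ : Set ((V₁ × Vs) × Module.Dual ℝ (V₁ × Vs))) (h₁ : IsDirac D₁)
    (D₂ : Set ((Vs × V₂) × Module.Dual ℝ (Vs × V₂))) (h₂ : IsDirac D₂)
    (Δint : Set ((V₁ × Vs) × (Vs × V₂)))
    (hΔint : Δint = {v | v.2.1 = -v.1.2})
    (Dint : Set (((V₁ × Vs) × (Vs × V₂)) × Module.Dual ℝ ((V₁ × Vs) × (Vs × V₂))))
    (hDint : Dint = {p | p.1 ∈ Δint ∧ ∀ w ∈ Δint, p.2 w = 0})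
    (Ψ : ((V₁ × Vs) × (Vs × V₂)) →ₗ[ℝ] V₁ × V₂)
    (hΨ : Ψ = (LinearMap.fst ℝ V₁ Vs).prodMap (LinearMap.snd ℝ Vs V₂)) :
    pushforward Ψ (bowtie (diracSum D₁ D₂) Dint) = diracComp D₁ D₂ := by
  subst hΔint hDint hΨ
  exact pushforward_bowtie_eq_comp_general D₁ D₂
end
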